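/- arXiv:1307.2806 — 3 statements merged into one kernel-verified Lean document; each statement's English description precedes it below -/
import Mathlib

section
/- For the output sequence Π = (Π₁,…,Πₙ) of the algorithm Universal(𝓘): for every index k with 1 ≤ k < n such that Π_k is not a swap item, d̃(Π_k) ≻ d̃(Π_{k+1}), i.e., every item directly following a non-swap item has strictly lower density with respect to the tie-broken density order. -/
/-!
Call a list *good* if, for any two consecutive entries `y, z`, either `y` is a swap item or
`d̃(y) ≻ d̃(z)`. Every step of the algorithm preserves goodness. Putting a swap item in front
creates only one new adjacency, whose first entry is a swap item. Inserting another item `x`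
after the maximal prefix of items denser than `x` creates at most two: an entry `y` of that prefix
followed by `x`, where `y ≻ x` by choice of the prefix, and `x` followed by the first entry `z`
outside it, where `¬ z ≻ x`, hence `x ≻ z` because `≻` is trichotomous and `z ≠ x`.
-/

/-- The packing of a list of items (a universal policy) for capacity `C`:
scan the list in order, starting from the empty packing, and add an item
whenever its size fits into the remaining capacity. -/
def pack {α R : Type*} [LinearOrder R] [Sub R] (size : α → R) : R → List α → List α
  | _, [] => []
  | C, x :: xs => if size x ≤ C then x :: pack size (C - size x) xs else pack size C xs

/-- The maximal prefix of a list of items fitting into capacity `C`. -/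
def prefixPack {α R : Type*} [LinearOrder R] [Sub R] (size : α → R) : R → List α → List α
  | _, [] => []
  | C, x :: xs => if size x ≤ C then x :: prefixPack size (C - size x) xs else []

/-- The tie-broken density order: `DSucc v l t i j` means `d̃(i) ≻ d̃(j)`,
i.e. `v i / l i > v j / l j`, or the densities are equal and `t i > t j`. -/
def DSucc {n : ℕ} (v l : Fin n → ℚ) (t : Fin n → Fin n) (i j : Fin n) : Prop :=
  v j / l j < v i / l i ∨ (v i / l i = v j / l j ∧ t j < t i)

instance {n : ℕ} (v l : Fin n → ℚ) (t : Fin n → Fin n) (i j : Fin n) :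
    Decidable (DSucc v l t i j) := by unfold DSucc; exact inferInstance

/-- `D` is the list of all items of size at most `C`, sorted strictly
decreasingly with respect to the tie-broken density order `d̃`. -/
def IsDensityList {n : ℕ} (v l : Fin n → ℚ) (t : Fin n → Fin n) (C : ℚ)
    (D : List (Fin n)) : Prop :=
  D.Nodup ∧ (∀ i, i ∈ D ↔ l i ≤ C) ∧ D.Pairwise (DSucc v l t)

/-- `i` is a swap item for capacity `C`: on the density-sorted list `D` of all
items of size at most `C`, the modified greedy algorithm finds `i` as the first
item after its maximal fitting prefix `P`, and `v i > v(P)`, so `MGreedy`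
returns `{i}`. -/
def SwapFor {n : ℕ} (v l : Fin n → ℚ) (t : Fin n → Fin n) (i : Fin n) (C : ℚ) : Prop :=
  ∃ D : List (Fin n), IsDensityList v l t C D ∧
    D[(prefixPack l C D).length]? = some i ∧
    ((prefixPack l C D).map v).sum < v i

/-- `i` is a swap item if it is a swap item for some capacity. -/
def IsSwapItem {n : ℕ} (v l : Fin n → ℚ) (t : Fin n → Fin n) (i : Fin n) : Prop :=
  ∃ C : ℚ, SwapFor v l t i C

/-- Insert `x` into a list immediately after the maximal prefix of elements
satisfying `p`. -/
def insertAfter {α : Type*} (p : α → Prop) [DecidablePred p] (x : α) : List α → List α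
  | [] => [x]
  | y :: ys => if p y then y :: insertAfter p x ys else x :: y :: ys

open Classical in
/-- The algorithm `Universal`: process the items in the order given by `L`
(non-decreasing sizes), starting from the empty sequence; a swap item is
inserted at the front of the current sequence, any other item `x` is inserted
immediately after the maximal prefix of items `y` with `d̃(y) ≻ d̃(x)`. -/
noncomputable def universalAlg {n : ℕ} (v l : Fin n → ℚ) (t : Fin n → Fin n)
    (L : List (Fin n)) : List (Fin n) :=
  L.foldl (fun acc x =>
    if IsSwapItem v l t x then x :: acc
    else insertAfter (fun y => DSucc v l t y x) x acc) []

theorem mem_insertAfter {α : Type*} (p : α → Prop) [DecidablePred p] (x a : α) (xs : List α) :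
    a ∈ insertAfter p x xs ↔ a = x ∨ a ∈ xs := by
  induction xs with
  | nil => simp [insertAfter]
  | cons y ys ih =>
    unfold insertAfter
    split_ifs
    · simp [ih]; tauto
    · simp

theorem head?_insertAfter {α : Type*} (p : α → Prop) [DecidablePred p] (x a : α) (xs : List α)
    (h : a ∈ (insertAfter p x xs).head?) : a = x ∨ a ∈ xs.head? := by
  cases xs with
  | nil => simpa [insertAfter, eq_comm] using h
  | cons y ys =>
    unfold insertAfter at h
    split_ifs at h
    · exact Or.inr (by simpa using h)
    · exact Or.inl (by simpa [eq_comm] using h)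

/-- Insertion keeps consecutive entries `R`-related if `R` holds from the entries satisfying `p`
to `x`, and from `x` to the others. -/
theorem isChain_insertAfter {α : Type*} {R : α → α → Prop} (p : α → Prop) [DecidablePred p]
    (x : α) (xs : List α) (hpx : ∀ y ∈ xs, p y → R y x) (hxp : ∀ y ∈ xs, ¬ p y → R x y)
    (h : xs.IsChain R) : (insertAfter p x xs).IsChain R := by
  induction xs with
  | nil => simp [insertAfter]
  | cons y ys ih =>
    have h' := List.isChain_cons.1 h
    unfold insertAfter
    split_ifs with hy
    · refine List.isChain_cons.2 ⟨fun a ha => ?_, ih (fun z hz => hpx z (by simp [hz]))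
        (fun z hz => hxp z (by simp [hz])) h'.2⟩
      rcases head?_insertAfter p x a ys ha with rfl | ha
      · exact hpx y (by simp) hy
      · exact h'.1 a ha
    · exact List.isChain_cons_cons.2 ⟨hxp y (by simp) hy, h⟩

theorem DSucc.of_not {n : ℕ} {v l : Fin n → ℚ} {t : Fin n → Fin n} (ht : Function.Injective t)
    {i j : Fin n} (hij : i ≠ j) (h : ¬ DSucc v l t j i) : DSucc v l t i j := by
  unfold DSucc at *
  push Not at h
  rcases h.1.lt_or_eq with hlt | heq
  · exact Or.inl hlt
  · exact Or.inr ⟨heq.symm, lt_of_le_of_ne (h.2 heq) fun e => hij (ht e).symm⟩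

open Classical in
/-- Goodness is invariant along the fold, provided no item is processed twice. -/
theorem isChain_foldl {n : ℕ} (v l : Fin n → ℚ) (t : Fin n → Fin n)
    (ht : Function.Injective t) (L acc : List (Fin n)) (hL : L.Nodup)
    (hdisj : ∀ x ∈ L, x ∉ acc)
    (hacc : acc.IsChain fun y z => ¬ IsSwapItem v l t y → DSucc v l t y z) :
    (L.foldl (fun acc x =>
      if IsSwapItem v l t x then x :: acc
      else insertAfter (fun y => DSucc v l t y x) x acc) acc).IsChain
        fun y z => ¬ IsSwapItem v l t y → DSucc v l t y z := by
  induction L generalizing acc with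
  | nil => exact hacc
  | cons x L ih =>
    obtain ⟨hxL, hL⟩ := List.nodup_cons.1 hL
    have hx : x ∉ acc := hdisj x (by simp)
    have hne : ∀ y ∈ L, y ≠ x := fun y hy e => hxL (e ▸ hy)
    rw [List.foldl_cons]
    refine ih _ hL (fun y hy => ?_) ?_
    · have := hdisj y (by simp [hy])
      split_ifs
      · simp [hne y hy, this]
      · simp [mem_insertAfter, hne y hy, this]
    · split_ifs with hs
      · exact List.isChain_cons.2 ⟨fun _ _ h => absurd hs h, hacc⟩
      · exact isChain_insertAfter _ x acc (fun y _ hyx _ => hyx)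
          (fun y hy hyx _ => DSucc.of_not ht (fun e => hx (e ▸ hy)) hyx) hacc

/-- In the output sequence `P` of `Universal(𝓘)`, every item
directly following a non-swap item has strictly lower tie-broken density:
if `P k` is not a swap item then `d̃(P k) ≻ d̃(P (k+1))`. -/
theorem universal_densities {n : ℕ} (v l : Fin n → ℚ)
    (hv : ∀ i, 0 ≤ v i) (hl : ∀ i, 0 < l i)
    (t : Fin n → Fin n) (ht : Function.Bijective t)
    (L : List (Fin n)) (hLnd : L.Nodup) (hLall : ∀ i, i ∈ L)
    (hLsorted : L.Pairwise fun a b => l a ≤ l b)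
    (P : List (Fin n)) (hP : P = universalAlg v l t L)
    (k : ℕ) (hk : k + 1 < P.length)
    (hns : ¬ IsSwapItem v l t (P[k]'(by omega))) :
    DSucc v l t (P[k]'(by omega)) (P[k + 1]'hk) := by
  subst hP
  have h := isChain_foldl v l t ht.injective L [] hLnd (by simp) (by simp)
  exact List.isChain_iff_getElem.1 h k hk hns
end

section
/- For the output sequence Π = (Π₁,…,Πₙ) of the algorithm Universal(𝓘): for every index k with 1 ≤ k < n, v(Π_k) ≥ v({Π_j : j > k and d̃(Π_j) ≻ d̃(Π_k)}), i.e., every item is worth at least as much as all later items of higher tie-broken density combined. -/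
section

variable {n : ℕ} {v l : Fin n → ℚ} {t : Fin n → Fin n}

/-- Every item of the list is worth at least as much as all later items of higher tie-broken
density combined. -/
def Legit (v l : Fin n → ℚ) (t : Fin n → Fin n) : List (Fin n) → Prop
  | [] => True
  | y :: ys => ((ys.filter (fun x => decide (DSucc v l t x y))).map v).sum ≤ v y ∧ Legit v l t ys

lemma DSucc.asymm {i j : Fin n} (h : DSucc v l t i j) : ¬ DSucc v l t j i := by
  unfold DSucc at *
  grind

lemma DSucc.trans_not {x y z : Fin n} (h : DSucc v l t z x) (h' : ¬ DSucc v l t y x) :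
    DSucc v l t z y := by
  unfold DSucc at *
  grind

lemma prefixPack_prefix (s : Fin n → ℚ) (D : List (Fin n)) (C : ℚ) : prefixPack s C D <+: D := by
  induction D generalizing C with
  | nil => simp [prefixPack]
  | cons x xs ih =>
    unfold prefixPack
    split_ifs
    · exact (List.prefix_cons_inj x).2 (ih _)
    · exact List.nil_prefix

lemma insertAfter_perm (p : Fin n → Prop) [DecidablePred p] (x : Fin n) (A : List (Fin n)) :
    (insertAfter p x A).Perm (x :: A) := by
  induction A with
  | nil => simp [insertAfter]
  | cons y ys ih =>
    unfold insertAfter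
    split_ifs
    · exact (ih.cons y).trans (List.Perm.swap x y ys)
    · exact List.Perm.refl _

lemma sum_map_le_of_subset (hv : ∀ i, 0 ≤ v i) {A B : List (Fin n)} (hA : A.Nodup)
    (h : A ⊆ B) : (A.map v).sum ≤ (B.map v).sum := by
  obtain ⟨A', hp, hsub⟩ := hA.subperm h
  rw [← (hp.map v).sum_eq]
  refine (hsub.map v).sum_le_sum ?_
  simpa using fun i _ => hv i

/-- A swap item is worth at least as much as any collection of denser items that are no larger
than it: all of them are packed by the greedy prefix for the witnessing capacity. -/
lemma sum_denser_le_of_isSwapItem (hv : ∀ i, 0 ≤ v i) {x : Fin n} (hx : IsSwapItem v l t x)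
    {A : List (Fin n)} (hA : A.Nodup) (hle : ∀ a ∈ A, l a ≤ l x) :
    ((A.filter (fun z => decide (DSucc v l t z x))).map v).sum ≤ v x := by
  obtain ⟨C, D, ⟨-, hmem, hsort⟩, hget, hlt⟩ := hx
  refine (sum_map_le_of_subset hv (hA.filter _) ?_).trans hlt.le
  intro z hz
  simp only [List.mem_filter, decide_eq_true_eq] at hz
  obtain ⟨hzA, hzx⟩ := hz
  have hzD : z ∈ D :=
    (hmem z).2 ((hle z hzA).trans ((hmem x).1 (List.mem_of_getElem? hget)))
  obtain ⟨S, hS⟩ := prefixPack_prefix l D C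
  generalize prefixPack l C D = Q at hS hget
  subst hS
  rcases List.mem_append.1 hzD with h | h
  · exact h
  -- The part of `D` behind the greedy prefix starts with `x`, so nothing in it is denser than `x`.
  · cases S with
    | nil => simp at h
    | cons s S =>
      simp at hget
      subst hget
      rcases List.mem_cons.1 h with rfl | h
      · exact absurd hzx hzx.asymm
      · exact absurd hzx
          (List.rel_of_pairwise_cons (List.pairwise_append.1 hsort).2.1 h).asymm

lemma legit_insertAfter (hv : ∀ i, 0 ≤ v i) (hl : ∀ i, 0 < l i) {x : Fin n} {A : List (Fin n)}
    (hA : A.Nodup) (hle : ∀ a ∈ A, l a ≤ l x) (h : Legit v l t A) :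
    Legit v l t (insertAfter (fun y => DSucc v l t y x) x A) := by
  induction A with
  | nil => simpa [insertAfter, Legit] using hv x
  | cons y ys ih =>
    obtain ⟨hy, hys⟩ := h
    have hnd := (List.nodup_cons.1 hA).2
    unfold insertAfter
    split_ifs with hyx
    · refine ⟨?_, ih hnd (fun a ha => hle a (List.mem_cons_of_mem _ ha)) hys⟩
      have hp := (((insertAfter_perm (fun y => DSucc v l t y x) x ys).filter
        (fun z => decide (DSucc v l t z y))).map v).sum_eq
      rw [hp, List.filter_cons_of_neg (by simpa using hyx.asymm)]
      exact hy
    · refine ⟨?_, hy, hys⟩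
      rw [List.filter_cons_of_neg (by simpa using hyx)]
      have hsub : ((ys.filter (fun z => decide (DSucc v l t z x))).map v).sum ≤
          ((ys.filter (fun z => decide (DSucc v l t z y))).map v).sum := by
        refine sum_map_le_of_subset hv (hnd.filter _) ?_
        intro z hz
        simp only [List.mem_filter, decide_eq_true_eq] at hz ⊢
        exact ⟨hz.1, hz.2.trans_not hyx⟩
      have hd : v y / l y ≤ v x / l x := not_lt.1 fun hlt => hyx (Or.inl hlt)
      have hvyx : v y ≤ v x :=
        calc v y = v y / l y * l y := (div_mul_cancel₀ _ (hl y).ne').symm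
          _ ≤ v x / l x * l x :=
            mul_le_mul hd (hle y List.mem_cons_self) (hl y).le (div_nonneg (hv x) (hl x).le)
          _ = v x := div_mul_cancel₀ _ (hl x).ne'
      exact hsub.trans (hy.trans hvyx)

open Classical in
/-- The loop of `Universal`, started from any legitimate sequence `A` whose items are no larger
than the items still to be processed, ends in a legitimate sequence. -/
lemma legit_foldl (hv : ∀ i, 0 ≤ v i) (hl : ∀ i, 0 < l i) (L A : List (Fin n))
    (hL : L.Nodup) (hA : A.Nodup) (hdisj : ∀ a ∈ A, a ∉ L)
    (hle : ∀ a ∈ A, ∀ b ∈ L, l a ≤ l b) (hs : L.Pairwise fun a b => l a ≤ l b)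
    (h : Legit v l t A) :
    Legit v l t (L.foldl (fun acc x =>
      if IsSwapItem v l t x then x :: acc
      else insertAfter (fun y => DSucc v l t y x) x acc) A) := by
  induction L generalizing A with
  | nil => exact h
  | cons x L ih =>
    rw [List.foldl_cons]
    rw [List.nodup_cons] at hL
    rw [List.pairwise_cons] at hs
    have hAx : ∀ a ∈ A, l a ≤ l x := fun a ha => hle a ha x List.mem_cons_self
    have hxA : (x :: A).Nodup :=
      List.nodup_cons.2 ⟨fun hx => hdisj x hx List.mem_cons_self, hA⟩
    have key : ∀ B : List (Fin n), B.Perm (x :: A) → Legit v l t B → _ := fun B hB hlegit =>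
      ih B hL.2 (hB.nodup_iff.2 hxA)
        (by
          intro a ha
          rcases List.mem_cons.1 (hB.mem_iff.1 ha) with rfl | ha
          · exact hL.1
          · exact fun haL => hdisj a ha (List.mem_cons_of_mem _ haL))
        (by
          intro a ha b hb
          rcases List.mem_cons.1 (hB.mem_iff.1 ha) with rfl | ha
          · exact hs.1 b hb
          · exact hle a ha b (List.mem_cons_of_mem _ hb))
        hs.2 hlegit
    apply key
    · split_ifs
      · exact List.Perm.refl _
      · exact insertAfter_perm _ _ _
    · split_ifs with hx
      · exact ⟨sum_denser_le_of_isSwapItem hv hx hA hAx, h⟩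
      · exact legit_insertAfter hv hl hA hAx h

lemma legit_getElem {P : List (Fin n)} (k : ℕ) (hk : k < P.length) (h : Legit v l t P) :
    (((P.drop (k + 1)).filter (fun x => decide (DSucc v l t x P[k]))).map v).sum ≤ v P[k] := by
  induction P generalizing k with
  | nil => simp at hk
  | cons y ys ih =>
    cases k with
    | zero => exact h.1
    | succ k => exact ih k (by simpa using hk) h.2

end

/-- In the output sequence `P` of `Universal(𝓘)`, every item
is worth at least as much as all later items of strictly higher tie-broken
density combined: `v(P k) ≥ v({P j : j > k and d̃(P j) ≻ d̃(P k)})`. -/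
theorem universal_order_violation_legitimation {n : ℕ} (v l : Fin n → ℚ)
    (hv : ∀ i, 0 ≤ v i) (hl : ∀ i, 0 < l i)
    (t : Fin n → Fin n) (ht : Function.Bijective t)
    (L : List (Fin n)) (hLnd : L.Nodup) (hLall : ∀ i, i ∈ L)
    (hLsorted : L.Pairwise fun a b => l a ≤ l b)
    (P : List (Fin n)) (hP : P = universalAlg v l t L)
    (k : ℕ) (hk : k + 1 < P.length) :
    ((((P.drop (k + 1)).filter
          (fun x => decide (DSucc v l t x (P[k]'(by omega))))).map v).sum)
      ≤ v (P[k]'(by omega)) := by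
  subst hP
  exact legit_getElem k (by omega) (legit_foldl hv hl L [] hLnd List.nodup_nil
    (by simp) (by simp) hLsorted trivial)
end

section
/- For every δ > 0 there exists an instance 𝓘 of the oblivious knapsack problem in which all items have unit density such that no universal policy for 𝓘 is (φ − δ)-robust, i.e., for every permutation Π of the items of 𝓘 there is a capacity C with 0 ≤ C ≤ l(𝓘) and v(Opt(𝓘,C)) > (φ − δ)·v(Π(C)), where φ = (1+√5)/2 is the golden ratio. -/
/-- The golden ratio `φ = (1 + √5)/2`. -/
noncomputable def phi : ℝ := (1 + Real.sqrt 5) / 2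

lemma pack_eq_nil {α : Type*} (v : α → ℝ) (C : ℝ) (h : ∀ i, C < v i) (l : List α) :
    pack v C l = [] := by
  induction l with
  | nil => rfl
  | cons x xs ih => simp [pack, not_le.mpr (h x), ih]

lemma pack_cons_eq_singleton {α : Type*} (v : α → ℝ) (C : ℝ) (x : α) (xs : List α)
    (hx : v x ≤ C) (h : ∀ i, C < v x + v i) : pack v C (x :: xs) = [x] := by
  rw [pack, if_pos hx, pack_eq_nil v (C - v x) fun i => by linarith [h i]]

lemma phi_sq : phi * phi = phi + 1 := by
  have h : Real.sqrt 5 * Real.sqrt 5 = 5 := Real.mul_self_sqrt (by norm_num)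
  unfold phi
  linarith

lemma phi_bounds : 1.6 < phi ∧ phi < 1.63 := by
  have h1 : (2.2 : ℝ) < Real.sqrt 5 := Real.lt_sqrt_of_sq_lt (by norm_num)
  have h2 : Real.sqrt 5 < 2.26 := (Real.sqrt_lt' (by norm_num)).mpr (by norm_num)
  unfold phi
  constructor <;> linarith

/-- For every `δ > 0` there is a unit-density instance of the
oblivious knapsack problem (each item's value equals its size, given by
`v i > 0`) on which no universal policy is `(φ − δ)`-robust: for every
permutation `P` of the items there are a capacity `0 ≤ C ≤ l(𝓘)` and a feasible
set `S` with `v(S) > (φ − δ)·v(P(C))`. -/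
theorem no_phi_minus_delta_robust_policy (δ : ℝ) (hδ : 0 < δ) :
    ∃ (n : ℕ) (v : Fin n → ℝ), (∀ i, 0 < v i) ∧
      ∀ P : List (Fin n), P.Nodup → (∀ i, i ∈ P) →
        ∃ C : ℝ, 0 ≤ C ∧ C ≤ ∑ i, v i ∧
          ∃ S : Finset (Fin n), ∑ i ∈ S, v i ≤ C ∧
            (phi - δ) * ((pack v C P).map v).sum < ∑ i ∈ S, v i := by
  obtain ⟨h1, h2⟩ := phi_bounds
  have hsq := phi_sq
  -- `ε ≤ δ / 2` gives `(φ - δ) * (1 + ε) < φ`; `ε ≤ 0.1` ensures that at capacity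
  -- `2 + 2ε` no item fits beside a first item of size `2φ - 2`.
  obtain ⟨ε, hε, hεδ, hε1⟩ : ∃ ε : ℝ, 0 < ε ∧ ε ≤ δ / 2 ∧ ε ≤ 0.1 :=
    ⟨min (δ / 2) 0.1, by positivity, min_le_left _ _, min_le_right _ _⟩
  have hsmall : (phi - δ) * (1 + ε) < phi := by nlinarith [mul_pos hδ hε]
  let v : Fin 5 → ℝ := ![1 + ε, 1 + ε, 2 * phi - 2, 3 - phi, phi]
  have v0 : v 0 = 1 + ε := rfl
  have v1 : v 1 = 1 + ε := rfl
  have v2 : v 2 = 2 * phi - 2 := rfl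
  have v3 : v 3 = 3 - phi := rfl
  have v4 : v 4 = phi := rfl
  clear_value v
  have hv : ∀ i, 1 + ε ≤ v i := by
    intro i
    fin_cases i <;> simp only [Fin.zero_eta, Fin.mk_one, Fin.reduceFinMk, v0, v1, v2, v3, v4] <;>
      linarith
  have key : ∀ x, ∃ C : ℝ, v x ≤ C ∧ C < v x + (1 + ε) ∧ C ≤ ∑ i, v i ∧
      ∃ S : Finset (Fin 5), ∑ i ∈ S, v i ≤ C ∧ (phi - δ) * v x < ∑ i ∈ S, v i := by
    have hsum : ∑ i, v i = 4 + 2 * ε + 2 * phi - 1 := by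
      rw [Fin.sum_univ_five, v0, v1, v2, v3, v4]; ring
    have hS4 : ∑ i ∈ ({4} : Finset (Fin 5)), v i = phi := by simp [v4]
    have hS01 : ∑ i ∈ ({0, 1} : Finset (Fin 5)), v i = 2 + 2 * ε := by
      rw [Finset.sum_pair (by decide), v0, v1]; ring
    have hS02 : ∑ i ∈ ({0, 2} : Finset (Fin 5)), v i = 2 * phi - 1 + ε := by
      rw [Finset.sum_pair (by decide), v0, v2]; ring
    have hS23 : ∑ i ∈ ({2, 3} : Finset (Fin 5)), v i = phi + 1 := by
      rw [Finset.sum_pair (by decide), v2, v3]; ring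
    rw [hsum]
    intro x
    fin_cases x <;> simp only [Fin.zero_eta, Fin.mk_one, Fin.reduceFinMk, v0, v1, v2, v3, v4]
    · exact ⟨phi, by linarith, by linarith, by linarith, {4}, hS4.le, by rwa [hS4]⟩
    · exact ⟨phi, by linarith, by linarith, by linarith, {4}, hS4.le, by rwa [hS4]⟩
    · exact ⟨2 + 2 * ε, by linarith, by linarith, by linarith, {0, 1}, hS01.le,
        by rw [hS01]; nlinarith⟩
    · exact ⟨2 * phi - 1 + ε, by linarith, by linarith, by linarith, {0, 2}, hS02.le,
        by rw [hS02]; nlinarith⟩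
    · exact ⟨phi + 1, by linarith, by linarith, by linarith, {2, 3}, hS23.le,
        by rw [hS23]; nlinarith⟩
  refine ⟨5, v, fun i => by linarith [hv i], ?_⟩
  rintro (_ | ⟨x, xs⟩) - hP
  · simpa using hP 0
  · obtain ⟨C, hx, hC, hle, S, hS, hlt⟩ := key x
    refine ⟨C, by linarith [hv x], hle, S, hS, ?_⟩
    rw [pack_cons_eq_singleton v C x xs hx fun i => by linarith [hv i]]
    simpa using hlt
end
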